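/- (Gagliardo–Nirenberg interpolation inequality.) Let d ≥ 1 be an integer and σ > 0 a real number with σ d < 2(σ + 1). Then there exists a constant C > 0 such that for every continuously differentiable function u : ℝ^d → ℂ with compact support, ‖u‖_{L^{2+2σ}} ≤ C ‖u‖_{L²}^{1 − σd/(2(1+σ))} ‖∇u‖_{L²}^{σd/(2(1+σ))}. -/

import Mathlib

open MeasureTheory
open scoped ENNReal NNReal

/-- integral form of the Gagliardo–Nirenberg bound with exponent `q`. -/
def GNBound (d : ℕ) (q : ℝ) : Prop :=
  ∃ K : ℝ≥0, ∀ u : EuclideanSpace ℝ (Fin d) → ℂ, ContDiff ℝ 1 u → HasCompactSupport u →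
    ∫⁻ x, ‖u x‖ₑ ^ q ≤ K * (∫⁻ x, ‖u x‖ₑ ^ (2 : ℝ)) ^ (q / 2 - d * (q - 2) / 4) *
      (∫⁻ x, ‖fderiv ℝ u x‖ₑ ^ (2 : ℝ)) ^ (d * (q - 2) / 4)

theorem GNBound.interp {d : ℕ} {q r : ℝ} (hq : 2 < q) (hqr : q < r)
    (hα : 0 ≤ r / 2 - d * (r - 2) / 4) (h : GNBound d r) : GNBound d q := by
  obtain ⟨K, hK⟩ := h
  have hr : 0 < r - 2 := by linarith
  set b : ℝ := (q - 2) / (r - 2) with hb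
  have hbr : b * (r - 2) = q - 2 := by rw [hb]; field_simp
  have hb0 : 0 ≤ b := div_nonneg (by linarith) hr.le
  have hb1 : b ≤ 1 := by rw [hb, div_le_one hr]; linarith
  refine ⟨K ^ b, fun u hu h2u => ?_⟩
  have hm : Measurable fun x => ‖u x‖ₑ := hu.continuous.measurable.enorm
  have key := ENNReal.lintegral_mul_norm_pow_le (μ := volume)
    (f := fun x => ‖u x‖ₑ ^ (2 : ℝ)) (g := fun x => ‖u x‖ₑ ^ r)
    (hm.pow_const _).aemeasurable (hm.pow_const _).aemeasurable
    (p := 1 - b) (q := b) (by linarith) hb0 (by ring)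
  have e1 : ∀ x, (‖u x‖ₑ ^ (2 : ℝ)) ^ (1 - b) * (‖u x‖ₑ ^ r) ^ b = ‖u x‖ₑ ^ q := by
    intro x
    rw [← ENNReal.rpow_mul, ← ENNReal.rpow_mul, ← ENNReal.rpow_add_of_nonneg]
    · congr 1; linarith
    · nlinarith
    · nlinarith
  simp only [e1] at key
  refine key.trans ?_
  set A := ∫⁻ x, ‖u x‖ₑ ^ (2 : ℝ)
  set G := ∫⁻ x, ‖fderiv ℝ u x‖ₑ ^ (2 : ℝ)
  calc A ^ (1 - b) * (∫⁻ x, ‖u x‖ₑ ^ r) ^ b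
      ≤ A ^ (1 - b) * (K * A ^ (r / 2 - d * (r - 2) / 4) * G ^ (d * (r - 2) / 4)) ^ b := by
        gcongr; exact hK u hu h2u
    _ = K ^ b * (A ^ (1 - b) * A ^ ((r / 2 - d * (r - 2) / 4) * b))
          * G ^ (d * (r - 2) / 4 * b) := by
        rw [ENNReal.mul_rpow_of_nonneg _ _ hb0, ENNReal.mul_rpow_of_nonneg _ _ hb0,
          ← ENNReal.rpow_mul, ← ENNReal.rpow_mul]
        ring
    _ = _ := by
        rw [← ENNReal.rpow_add_of_nonneg _ _ (by linarith) (mul_nonneg hα hb0),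
          ENNReal.coe_rpow_of_nonneg _ hb0]
        rw [show 1 - b + (r / 2 - d * (r - 2) / 4) * b = q / 2 - d * (q - 2) / 4 by
            linear_combination (1 / 2 - d / 4 : ℝ) * hbr,
          show d * (r - 2) / 4 * b = d * (q - 2) / 4 by
            linear_combination (d / 4 : ℝ) * hbr]

theorem enorm_fderiv_pow {d : ℕ} {u : EuclideanSpace ℝ (Fin d) → ℂ} (hu : ContDiff ℝ 1 u)
    (k : ℕ) (x) : ‖fderiv ℝ (u ^ (k + 1)) x‖ₑ
      = ((k + 1 : ℕ) : ℝ≥0∞) * (‖u x‖ₑ ^ k * ‖fderiv ℝ u x‖ₑ) := by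
  rw [fderiv_pow _ (hu.differentiable one_ne_zero).differentiableAt, enorm_smul]
  simp only [Nat.add_sub_cancel, nsmul_eq_mul, enorm_mul, enorm_pow, mul_assoc]
  congr 1
  rw [← ofReal_norm, Complex.norm_natCast, ENNReal.ofReal_natCast]

theorem lintegral_fderiv_pow_le {d : ℕ} {u : EuclideanSpace ℝ (Fin d) → ℂ} (hu : ContDiff ℝ 1 u)
    (k : ℕ) : ∫⁻ x, ‖fderiv ℝ (u ^ (k + 1)) x‖ₑ
      ≤ ((k + 1 : ℕ) : ℝ≥0∞) * ((∫⁻ x, ‖u x‖ₑ ^ (2 * k : ℝ)) ^ (1 / 2 : ℝ)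
        * (∫⁻ x, ‖fderiv ℝ u x‖ₑ ^ (2 : ℝ)) ^ (1 / 2 : ℝ)) := by
  have hm : Measurable fun x => ‖u x‖ₑ := hu.continuous.measurable.enorm
  have hm' : Measurable fun x => ‖fderiv ℝ u x‖ₑ :=
    (hu.continuous_fderiv one_ne_zero).measurable.enorm
  simp only [enorm_fderiv_pow hu]
  rw [lintegral_const_mul _ (by fun_prop)]
  gcongr
  have key := ENNReal.lintegral_mul_norm_pow_le (μ := volume)
    (f := fun x => ‖u x‖ₑ ^ (2 * k : ℝ)) (g := fun x => ‖fderiv ℝ u x‖ₑ ^ (2 : ℝ))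
    (hm.pow_const _).aemeasurable (hm'.pow_const _).aemeasurable
    (p := 1 / 2) (q := 1 / 2) (by norm_num) (by norm_num) (by norm_num)
  refine le_trans (le_of_eq ?_) key
  congr with x
  rw [← ENNReal.rpow_mul, ← ENNReal.rpow_mul]
  rw [show (2 * k * (1 / 2) : ℝ) = k by ring, show (2 * (1 / 2) : ℝ) = 1 by norm_num,
    ENNReal.rpow_one, ENNReal.rpow_natCast]

theorem compactSupport_pow {d : ℕ} {u : EuclideanSpace ℝ (Fin d) → ℂ}
    (h2u : HasCompactSupport u) (k : ℕ) : HasCompactSupport (u ^ (k + 1)) := by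
  refine h2u.mono ?_
  intro x hx
  simp only [Function.mem_support, Pi.pow_apply] at *
  exact fun h => hx (by simp [h])

theorem GNBound.two (k : ℕ) : GNBound 2 (2 * (k + 1 : ℕ)) := by
  induction k with
  | zero =>
    refine ⟨1, fun u hu h2u => ?_⟩
    norm_num
  | succ k ih =>
    obtain ⟨K, hK⟩ := ih
    set C := lintegralPowLePowLIntegralFDerivConst
      (volume : Measure (EuclideanSpace ℝ (Fin 2))) 2
    refine ⟨C * (k + 2 : ℕ) ^ 2 * K, fun u hu h2u => ?_⟩
    have h := lintegral_pow_le_pow_lintegral_fderiv (volume : Measure (EuclideanSpace ℝ (Fin 2)))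
      (hu.pow (k + 2)) (compactSupport_pow h2u (k + 1)) (p := 2)
      (by simpa using Real.HolderConjugate.two_two)
    have h2 := lintegral_fderiv_pow_le hu (k + 1)
    have hK := hK u hu h2u
    have e : ∀ x, ‖(u ^ (k + 1 + 1)) x‖ₑ ^ (2 : ℝ) = ‖u x‖ₑ ^ (2 * (k + 1 + 1 : ℕ) : ℝ) := by
      intro x
      rw [Pi.pow_apply, enorm_pow, ← ENNReal.rpow_natCast, ← ENNReal.rpow_mul, mul_comm]
    have h : ∫⁻ x, ‖u x‖ₑ ^ (2 * (k + 1 + 1 : ℕ) : ℝ) ≤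
        C * (∫⁻ x, ‖fderiv ℝ (u ^ (k + 1 + 1)) x‖ₑ) ^ (2 : ℝ) := by
      simp only [← e]; exact h
    set A := ∫⁻ x, ‖u x‖ₑ ^ (2 : ℝ)
    set G := ∫⁻ x, ‖fderiv ℝ u x‖ₑ ^ (2 : ℝ)
    set B := ∫⁻ x, ‖u x‖ₑ ^ (2 * (k + 1 : ℕ) : ℝ)
    have hK : B ≤ K * A * G ^ (k : ℝ) := by
      refine hK.trans (le_of_eq ?_)
      push_cast
      congr
      · convert ENNReal.rpow_one A using 2; ring
      · ring
    refine h.trans ?_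
    calc C * (∫⁻ x, ‖fderiv ℝ (u ^ (k + 1 + 1)) x‖ₑ) ^ (2 : ℝ)
        ≤ C * (((k + 1 + 1 : ℕ) : ℝ≥0∞) * (B ^ (1 / 2 : ℝ) * G ^ (1 / 2 : ℝ))) ^ (2 : ℝ) := by
          gcongr
      _ = C * (((k + 1 + 1 : ℕ) : ℝ≥0∞) ^ 2 * (B * G)) := by
          rw [ENNReal.mul_rpow_of_nonneg _ _ (by norm_num),
            ENNReal.mul_rpow_of_nonneg _ _ (by norm_num), ← ENNReal.rpow_mul, ← ENNReal.rpow_mul]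
          norm_num
      _ ≤ C * (((k + 1 + 1 : ℕ) : ℝ≥0∞) ^ 2 * ((K * A * G ^ (k : ℝ)) * G)) := by gcongr
      _ = C * ((k + 1 + 1 : ℕ) : ℝ≥0∞) ^ 2 * K * A * (G ^ (k : ℝ) * G ^ (1 : ℝ)) := by
          rw [ENNReal.rpow_one]; ring
      _ = _ := by
          rw [← ENNReal.rpow_add_of_nonneg _ _ (by positivity) (by norm_num)]
          push_cast
          rw [show (2 * (k + 1 + 1) / 2 - 2 * (2 * (k + 1 + 1) - 2) / 4 : ℝ) = 1 by ring,
            show (2 * (2 * (k + 1 + 1) - 2) / 4 : ℝ) = k + 1 by ring, ENNReal.rpow_one,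
            show (k + 1 + 1 : ℝ≥0∞) = k + 2 by rw [add_assoc, one_add_one_eq_two]]

theorem GNBound.one {q : ℝ} (hq : 2 < q) : GNBound 1 q := by
  refine ⟨2 ^ ((q - 2) / 2), fun u hu h2u => ?_⟩
  have hm : Measurable fun x => ‖u x‖ₑ := hu.continuous.measurable.enorm
  have h2 := lintegral_fderiv_pow_le hu 1
  set A := ∫⁻ x, ‖u x‖ₑ ^ (2 : ℝ) with hA
  set G := ∫⁻ x, ‖fderiv ℝ u x‖ₑ ^ (2 : ℝ)
  let e : ℝ ≃ₗᵢ[ℝ] EuclideanSpace ℝ (Fin 1) := (OrthonormalBasis.singleton (Fin 1) ℝ).repr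
  have hv : ContDiff ℝ 1 (u ^ 2) := hu.pow 2
  have hsup : ∀ x, ‖u x‖ₑ ^ 2 ≤ 2 * (A ^ (1 / 2 : ℝ) * G ^ (1 / 2 : ℝ)) := by
    intro x
    obtain ⟨t, rfl⟩ := e.surjective x
    calc ‖u (e t)‖ₑ ^ 2 = ‖((u ^ 2) ∘ e) t‖ₑ := by simp
      _ ≤ ∫⁻ y in Set.Iic t, ‖deriv ((u ^ 2) ∘ e) y‖ₑ :=
          HasCompactSupport.enorm_le_lintegral_Ici_deriv
            (hv.comp e.contDiff)
            ((compactSupport_pow h2u 1).comp_homeomorph e.toHomeomorph) t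
      _ ≤ ∫⁻ y, ‖deriv ((u ^ 2) ∘ e) y‖ₑ := setLIntegral_le_lintegral _ _
      _ ≤ ∫⁻ y, ‖fderiv ℝ (u ^ 2) (e y)‖ₑ := by
          gcongr with y
          have hd : HasDerivAt (e : ℝ → EuclideanSpace ℝ (Fin 1)) (e 1) y :=
            (e.toContinuousLinearEquiv : ℝ →L[ℝ] EuclideanSpace ℝ (Fin 1)).hasDerivAt
          have := ((hv.differentiable one_ne_zero) (e y)).hasFDerivAt.comp_hasDerivAt y hd
          rw [this.deriv]
          refine (ContinuousLinearMap.le_opENorm _ _).trans (le_of_eq ?_)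
          rw [show ‖e 1‖ₑ = 1 by rw [e.enorm_map]; simp, mul_one]
      _ = ∫⁻ x, ‖fderiv ℝ (u ^ 2) x‖ₑ :=
          e.measurePreserving.lintegral_comp
            (hv.continuous_fderiv one_ne_zero).measurable.enorm
      _ ≤ _ := by simpa [hA] using h2
  set M := 2 * (A ^ (1 / 2 : ℝ) * G ^ (1 / 2 : ℝ))
  have hs : 0 ≤ (q - 2) / 2 := by linarith
  calc ∫⁻ x, ‖u x‖ₑ ^ q ≤ ∫⁻ x, M ^ ((q - 2) / 2) * ‖u x‖ₑ ^ (2 : ℝ) := by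
        gcongr with x
        calc ‖u x‖ₑ ^ q = (‖u x‖ₑ ^ 2) ^ ((q - 2) / 2) * ‖u x‖ₑ ^ (2 : ℝ) := by
              rw [← ENNReal.rpow_natCast, ← ENNReal.rpow_mul,
                ← ENNReal.rpow_add_of_nonneg _ _ (by positivity) (by norm_num)]
              congr 1; push_cast; ring
          _ ≤ _ := by gcongr; exact hsup x
    _ = M ^ ((q - 2) / 2) * A := by rw [lintegral_const_mul _ (hm.pow_const _)]
    _ = 2 ^ ((q - 2) / 2) * (A ^ (1 / 2 * ((q - 2) / 2)) * A ^ (1 : ℝ))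
          * G ^ (1 / 2 * ((q - 2) / 2)) := by
        rw [ENNReal.mul_rpow_of_nonneg _ _ hs, ENNReal.mul_rpow_of_nonneg _ _ hs,
          ← ENNReal.rpow_mul, ← ENNReal.rpow_mul, ENNReal.rpow_one]
        ring
    _ = _ := by
        rw [← ENNReal.rpow_add_of_nonneg _ _ (by positivity) (by norm_num),
          ENNReal.coe_rpow_of_nonneg _ hs]
        push_cast
        rw [show 1 / 2 * ((q - 2) / 2) + 1 = q / 2 - 1 * (q - 2) / 4 by ring,
          show 1 / 2 * ((q - 2) / 2) = 1 * (q - 2) / 4 by ring]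

theorem GNBound.three {d : ℕ} (hd : 3 ≤ d) : GNBound d (2 * d / (d - 2)) := by
  have hd' : (3 : ℝ) ≤ d := by exact_mod_cast hd
  have hd2 : (0 : ℝ) < d - 2 := by linarith
  have hr0 : (0 : ℝ) < 2 * d / (d - 2) := by positivity
  set r : ℝ≥0 := ⟨2 * d / (d - 2), hr0.le⟩ with hr
  have hrr : (r : ℝ) = 2 * d / (d - 2) := rfl
  rw [← hrr] at hr0 ⊢
  have hrne : r ≠ 0 := by
    rintro h; rw [h] at hr0; simp at hr0
  set C := eLpNormLESNormFDerivOfEqInnerConst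
    (volume : Measure (EuclideanSpace ℝ (Fin d))) ((2 : ℝ≥0) : ℝ)
  refine ⟨C ^ (r : ℝ), fun u hu h2u => ?_⟩
  have h := eLpNorm_le_eLpNorm_fderiv_of_eq_inner (volume : Measure (EuclideanSpace ℝ (Fin d)))
    hu h2u (p := 2) (p' := r) (by norm_num) (by simp; omega)
    (by simp [hrr]; field_simp)
  have h3 := eLpNorm_nnreal_pow_eq_lintegral (μ := volume) (f := fderiv ℝ u)
    (p := 2) (by norm_num)
  rw [← eLpNorm_nnreal_pow_eq_lintegral hrne]
  simp only [NNReal.coe_ofNat] at h3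
  rw [← h3]
  calc eLpNorm u r volume ^ (r : ℝ)
      ≤ (C * eLpNorm (fderiv ℝ u) (2 : ℝ≥0) volume) ^ (r : ℝ) := by gcongr
    _ = _ := by
      have e1 : (r : ℝ) / 2 - d * (r - 2) / 4 = 0 := by rw [hrr]; field_simp; ring
      have e2 : (2 : ℝ) * (d * (r - 2) / 4) = r := by rw [hrr]; field_simp; ring
      rw [e1, ENNReal.rpow_zero, mul_one, ← ENNReal.rpow_mul, e2,
        ENNReal.mul_rpow_of_nonneg _ _ hr0.le, ENNReal.coe_rpow_of_nonneg _ hr0.le]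

theorem GNBound.all {d : ℕ} (hd : 1 ≤ d) {σ : ℝ} (hσ : 0 < σ)
    (hσd : σ * d < 2 * (σ + 1)) : GNBound d (2 + 2 * σ) := by
  obtain rfl | rfl | h3 : d = 1 ∨ d = 2 ∨ 3 ≤ d := by omega
  · exact GNBound.one (by linarith)
  · obtain ⟨k, hk⟩ := exists_nat_gt σ
    refine GNBound.interp (by linarith) ?_ ?_ (GNBound.two k)
    · push_cast; linarith
    · push_cast; ring_nf; norm_num
  · have hd' : (3 : ℝ) ≤ d := by exact_mod_cast h3
    have hd2 : (0 : ℝ) < d - 2 := by linarith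
    refine GNBound.interp (by linarith) ?_ ?_ (GNBound.three h3)
    · rw [lt_div_iff₀ hd2]; nlinarith
    · apply le_of_eq; field_simp; ring

/-- Gagliardo–Nirenberg interpolation inequality on ℝ^d. -/
theorem stmt2 (d : ℕ) (hd : 1 ≤ d) (σ : ℝ) (hσ : 0 < σ)
    (hσd : σ * d < 2 * (σ + 1)) :
    ∃ C > (0 : ℝ), ∀ u : EuclideanSpace ℝ (Fin d) → ℂ,
      ContDiff ℝ 1 u → HasCompactSupport u →
      (eLpNorm u (ENNReal.ofReal (2 + 2 * σ)) volume).toReal ≤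
        C * (eLpNorm u 2 volume).toReal ^ (1 - σ * d / (2 * (1 + σ))) *
          (eLpNorm (fun x => ‖fderiv ℝ u x‖) 2 volume).toReal ^ (σ * d / (2 * (1 + σ))) := by
  obtain ⟨K, hK⟩ := GNBound.all hd hσ hσd
  have hq : 0 < 2 + 2 * σ := by linarith
  have hq' : 0 ≤ 1 / (2 + 2 * σ) := by positivity
  set D : ℝ≥0 := K ^ (1 / (2 + 2 * σ)) with hD
  refine ⟨D + 1, by positivity, fun u hu h2u => ?_⟩
  have hK := hK u hu h2u
  have f1 : eLpNorm u 2 volume ≠ ⊤ := (hu.continuous.memLp_of_hasCompactSupport h2u).2.ne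
  have f2 : eLpNorm (fun x => ‖fderiv ℝ u x‖) 2 volume ≠ ⊤ := by
    rw [eLpNorm_norm]
    exact ((hu.continuous_fderiv one_ne_zero).memLp_of_hasCompactSupport (h2u.fderiv ℝ)).2.ne
  have hθ0 : 0 ≤ σ * d / (2 * (1 + σ)) := by positivity
  have hθ1 : 0 ≤ 1 - σ * d / (2 * (1 + σ)) := by
    rw [sub_nonneg, div_le_one (by linarith)]; linarith
  have main : eLpNorm u (ENNReal.ofReal (2 + 2 * σ)) volume ≤
      D * eLpNorm u 2 volume ^ (1 - σ * d / (2 * (1 + σ))) *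
        eLpNorm (fun x => ‖fderiv ℝ u x‖) 2 volume ^ (σ * d / (2 * (1 + σ))) := by
    rw [eLpNorm_norm, eLpNorm_eq_lintegral_rpow_enorm_toReal (by simpa using hq) (by simp),
      eLpNorm_eq_lintegral_rpow_enorm_toReal (p := 2) (by simp) (by simp),
      eLpNorm_eq_lintegral_rpow_enorm_toReal (p := 2) (by simp) (by simp),
      ENNReal.toReal_ofReal hq.le, ENNReal.toReal_ofNat]
    refine (ENNReal.rpow_le_rpow hK hq').trans (le_of_eq ?_)
    rw [ENNReal.mul_rpow_of_nonneg _ _ hq', ENNReal.mul_rpow_of_nonneg _ _ hq',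
      ← ENNReal.rpow_mul, ← ENNReal.rpow_mul, ← ENNReal.rpow_mul, ← ENNReal.rpow_mul, hD,
      ENNReal.coe_rpow_of_nonneg _ hq']
    rw [show ((2 + 2 * σ) / 2 - d * (2 + 2 * σ - 2) / 4) * (1 / (2 + 2 * σ))
        = 1 / 2 * (1 - σ * d / (2 * (1 + σ))) by field_simp; ring,
      show (d * (2 + 2 * σ - 2) / 4) * (1 / (2 + 2 * σ))
        = 1 / 2 * (σ * d / (2 * (1 + σ))) by field_simp; ring]
  have main2 := ENNReal.toReal_mono (by finiteness) main
  rw [ENNReal.toReal_mul, ENNReal.toReal_mul, ← ENNReal.toReal_rpow, ← ENNReal.toReal_rpow,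
    ENNReal.coe_toReal] at main2
  refine main2.trans ?_
  gcongr
  linarith
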